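/- Let $(D,C)$ be a tiling of $\mathbb{F}_2^n$ and suppose $D=B_d(0,r)$ for some TS-metric $d$ on $\mathbb{F}_2^n$ and some $r>0$. Then $D$ is a polyhedromino: any two points of $D$ are joined by a geodesic path (with respect to the Hamming distance) entirely contained in $D$. -/

import Mathlib

abbrev V (n : ℕ) := Fin n → ZMod 2

/-- The support of a vector. -/
def supp {n : ℕ} (x : V n) : Set (Fin n) := {i | x i ≠ 0}

/-- `d` is a metric on `𝔽₂ⁿ`. -/
def IsMetric {n : ℕ} (d : V n → V n → ℝ) : Prop :=
  (∀ x y, 0 ≤ d x y) ∧ (∀ x y, d x y = 0 ↔ x = y) ∧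
  (∀ x y, d x y = d y x) ∧ (∀ x y z, d x z ≤ d x y + d y z)

/-- `d` is translation-invariant. -/
def TransInv {n : ℕ} (d : V n → V n → ℝ) : Prop :=
  ∀ x y z : V n, d (x + z) (y + z) = d x y

/-- The weight of `d` respects supports. -/
def RespectsSupport {n : ℕ} (d : V n → V n → ℝ) : Prop :=
  ∀ x y : V n, supp x ⊆ supp y → d x 0 ≤ d y 0

/-- A TS-metric: a translation-invariant metric respecting supports. -/
def IsTSMetric {n : ℕ} (d : V n → V n → ℝ) : Prop :=
  IsMetric d ∧ TransInv d ∧ RespectsSupport d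

/-- The ball of center `x` and radius `r`. -/
def ball {n : ℕ} (d : V n → V n → ℝ) (x : V n) (r : ℝ) : Set (V n) :=
  {y | d x y ≤ r}

/-- `(D, C)` is a tiling of `𝔽₂ⁿ`. -/
def IsTiling {n : ℕ} (D C : Set (V n)) : Prop :=
  (⋃ c ∈ C, (fun x => c + x) '' D) = Set.univ ∧
  C.PairwiseDisjoint (fun c => (fun x => c + x) '' D)

/-- `γ` is a geodesic path of length `t` (for the Hamming distance). -/
def IsGeodesic {n : ℕ} (γ : ℕ → V n) (t : ℕ) : Prop :=
  (∀ i < t, hammingDist (γ i) (γ (i + 1)) = 1) ∧ hammingDist (γ 0) (γ t) = t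

/-- A polyhedromino: a nonempty set any two points of which are connected by a
geodesic path contained in the set. -/
def IsPolyhedromino {n : ℕ} (D : Set (V n)) : Prop :=
  D.Nonempty ∧ ∀ x ∈ D, ∀ y ∈ D, ∃ (t : ℕ) (γ : ℕ → V n),
    IsGeodesic γ t ∧ γ 0 = x ∧ γ t = y ∧ ∀ i ≤ t, γ i ∈ D


theorem hd_update {n : ℕ} (x y : V n) (i : Fin n) (h : x i ≠ y i) :
    hammingDist (Function.update x i (y i)) y + 1 = hammingDist x y := by
  unfold hammingDist
  have : (Finset.univ.filter fun j => Function.update x i (y i) j ≠ y j)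
      = (Finset.univ.filter fun j => x j ≠ y j).erase i := by
    ext j
    by_cases hj : j = i
    · subst hj; simp
    · simp [hj]
  rw [this]
  exact Finset.card_erase_add_one (by simp [h])

theorem hd_step {n : ℕ} (x : V n) (i : Fin n) (a : ZMod 2) (h : x i ≠ a) :
    hammingDist x (Function.update x i a) = 1 := by
  unfold hammingDist
  rw [Finset.card_eq_one]
  refine ⟨i, ?_⟩
  ext j
  by_cases hj : j = i
  · subst hj; simp [h]
  · simp [hj]


theorem downset_path {n : ℕ} (D : Set (V n))
    (hdown : ∀ x y : V n, supp x ⊆ supp y → y ∈ D → x ∈ D) (t : ℕ) :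
    ∀ x ∈ D, ∀ y ∈ D, hammingDist x y = t → ∃ γ : ℕ → V n,
      (∀ i < t, hammingDist (γ i) (γ (i + 1)) = 1) ∧ γ 0 = x ∧ γ t = y ∧
      ∀ i ≤ t, γ i ∈ D := by
  induction t with
  | zero =>
    intro x hx y hy h
    have : x = y := hammingDist_eq_zero.mp h
    exact ⟨fun _ => x, by simp, rfl, this, fun _ _ => hx⟩
  | succ t ih =>
    intro x hx y hy h
    have key : ∃ i, x i ≠ y i ∧ Function.update x i (y i) ∈ D := by
      by_cases hc : ∃ i, x i ≠ y i ∧ x i ≠ 0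
      · obtain ⟨i, hi, hi0⟩ := hc
        refine ⟨i, hi, hdown _ x ?_ hx⟩
        intro j hj
        by_cases hji : j = i
        · subst hji; exact hi0
        · simpa [supp, hji] using hj
      · push Not at hc
        have hne : x ≠ y := by
          rintro rfl
          simp at h
        obtain ⟨i, hi⟩ := Function.ne_iff.mp hne
        refine ⟨i, hi, hdown _ y ?_ hy⟩
        intro j hj
        by_cases hji : j = i
        · subst hji; simpa [supp] using hj
        · have hj' : x j ≠ 0 := by simpa [supp, hji] using hj
          have : x j = y j := by
            by_contra hne
            exact hj' (hc j hne)
          show y j ≠ 0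
          rwa [← this]
    obtain ⟨i, hi, hmem⟩ := key
    have h1 := hd_update x y i hi
    obtain ⟨γ, hs, h0, ht, hm⟩ := ih _ hmem y hy (by omega)
    refine ⟨fun k => Nat.casesOn k x γ, ?_, rfl, ht, ?_⟩
    · intro k hk
      cases k with
      | zero => show hammingDist x (γ 0) = 1
                rw [h0]; exact hd_step x i _ hi
      | succ k => exact hs k (by omega)
    · intro k hk
      cases k with
      | zero => exact hx
      | succ k => exact hm k (by omega)

theorem stmt_1 {n : ℕ} (D C : Set (V n)) (d : V n → V n → ℝ) (r : ℝ)
    (htiling : IsTiling D C) (hd : IsTSMetric d) (hr : 0 < r)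
    (hD : D = ball d 0 r) :
    IsPolyhedromino D := by
  obtain ⟨⟨_, hz, hsymm, _⟩, _, hsupp⟩ := hd
  have hdown : ∀ x y : V n, supp x ⊆ supp y → y ∈ D → x ∈ D := by
    intro x y hxy hy
    rw [hD] at hy ⊢
    have hy' : d 0 y ≤ r := hy
    show d 0 x ≤ r
    have := hsupp x y hxy
    rw [hsymm x 0, hsymm y 0] at this
    exact this.trans hy'
  refine ⟨⟨0, ?_⟩, ?_⟩
  · rw [hD]
    show d 0 0 ≤ r
    rw [(hz 0 0).mpr rfl]
    exact hr.le
  · intro x hx y hy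
    obtain ⟨γ, hs, h0, ht, hm⟩ := downset_path D hdown _ x hx y hy rfl
    exact ⟨hammingDist x y, γ, ⟨hs, by rw [h0, ht]⟩, h0, ht, hm⟩
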